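/- Let x_1 < x_2 < x_3 < x_4 be real numbers and let θ̂ = μ̂ + iσ̂ ∈ ℍ maximize the Cauchy likelihood of (x_1, x_2, x_3, x_4) over ℍ. Then F(x_3; θ̂) − F(x_1; θ̂) = 1/2 and F(x_4; θ̂) − F(x_2; θ̂) = 1/2, where F(x; μ + iσ) = 1/2 + (1/π)·arctan((x − μ)/σ). -/

import Mathlib

open Complex Finset

/-- The Cauchy likelihood of the sample `x` at parameter `θ = μ + iσ`. -/
noncomputable def cauchyL {n : ℕ} (x : Fin n → ℝ) (θ : ℂ) : ℝ :=
  ∏ j, (θ.im / Real.pi) / ((x j - θ.re) ^ 2 + θ.im ^ 2)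

/-- Cumulative distribution function of the Cauchy distribution with parameter `θ = μ + iσ`. -/
noncomputable def cauchyCDF (xv : ℝ) (θ : ℂ) : ℝ :=
  1 / 2 + (1 / Real.pi) * Real.arctan ((xv - θ.re) / θ.im)

lemma aux_alg (s a b c d : ℝ) (hs : 0 < s) (hab : a < b) (hbc : b < c) (hcd : c < d)
    (A : a * ((b^2+s^2)*(c^2+s^2)*(d^2+s^2)) + b * ((a^2+s^2)*(c^2+s^2)*(d^2+s^2))
      + c * ((a^2+s^2)*(b^2+s^2)*(d^2+s^2)) + d * ((a^2+s^2)*(b^2+s^2)*(c^2+s^2)) = 0)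
    (B : s^2 * ((b^2+s^2)*(c^2+s^2)*(d^2+s^2) + (a^2+s^2)*(c^2+s^2)*(d^2+s^2)
      + (a^2+s^2)*(b^2+s^2)*(d^2+s^2) + (a^2+s^2)*(b^2+s^2)*(c^2+s^2))
      = 2 * ((a^2+s^2)*(b^2+s^2)*(c^2+s^2)*(d^2+s^2))) :
    a * c = -s^2 ∧ b * d = -s^2 := by
  have hD : (a^2+s^2)*(b^2+s^2)*(c^2+s^2)*(d^2+s^2) ≠ 0 := by positivity
  have hU : s^4 = a*b*c*d := by
    have : ((a^2+s^2)*(b^2+s^2)*(c^2+s^2)*(d^2+s^2)) * (4*(s^4 - a*b*c*d)) = 0 := by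
      linear_combination 2 * (s^4 - s^2*(a*b+a*c+a*d+b*c+b*d+c*d) + a*b*c*d) * B
        + 2 * s * (s^3*(a+b+c+d) - s*(a*b*c+a*b*d+a*c*d+b*c*d)) * A
    have := (mul_eq_zero.mp this).resolve_left hD
    linarith
  have hV : s^2*(a+b+c+d) + (a*b*c+a*b*d+a*c*d+b*c*d) = 0 := by
    have : ((a^2+s^2)*(b^2+s^2)*(c^2+s^2)*(d^2+s^2)) *
        (s * (-2*(s^2*(a+b+c+d) + (a*b*c+a*b*d+a*c*d+b*c*d)))) = 0 := by
      linear_combination 2 * s * (s^4 - s^2*(a*b+a*c+a*d+b*c+b*d+c*d) + a*b*c*d) * A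
        - 2 * (s^3*(a+b+c+d) - s*(a*b*c+a*b*d+a*c*d+b*c*d)) * B
    have := (mul_eq_zero.mp ((mul_eq_zero.mp this).resolve_left hD)).resolve_left hs.ne'
    linarith
  have h : (s^2+a*b)*((s^2+a*c)*(s^2+a*d)) = 0 := by
    linear_combination s^2 * a * hV + (s^2 - a^2) * hU
  have hs2 : s^2 ≠ 0 := by positivity
  have hs2p : 0 < s^2 := by positivity
  rcases mul_eq_zero.mp h with h | h
  · exfalso
    have h2 : c*d = -s^2 := by
      apply mul_left_cancel₀ hs2
      linear_combination hU + c*d*h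
    have : c < 0 := by
      by_contra hc
      push Not at hc
      nlinarith [mul_nonneg hc (hc.trans hcd.le)]
    nlinarith [mul_pos_of_neg_of_neg (hab.trans (hbc.trans this)) (hbc.trans this)]
  rcases mul_eq_zero.mp h with h | h
  · refine ⟨by linarith, ?_⟩
    apply mul_left_cancel₀ hs2
    linear_combination hU + b*d*h
  · exfalso
    have h2 : b*c = -s^2 := by
      apply mul_left_cancel₀ hs2
      linear_combination hU + b*c*h
    have hb : b < 0 := by
      by_contra hc
      push Not at hc
      nlinarith [mul_nonneg hc (hc.trans hbc.le)]
    have hc : 0 < c := by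
      by_contra hc
      push Not at hc
      nlinarith [mul_nonneg_of_nonpos_of_nonpos hb.le hc]
    nlinarith [mul_pos (sub_pos.2 hab) (hc.trans hcd), mul_pos (neg_pos.2 hb) (sub_pos.2 hcd)]

lemma aux_cdf (x y : ℝ) (θ : ℂ) (hθ : 0 < θ.im) (hxy : x < y)
    (h : (x - θ.re) * (y - θ.re) = -θ.im^2) : cauchyCDF y θ - cauchyCDF x θ = 1/2 := by
  have hx : x - θ.re < 0 := by
    by_contra hc
    push Not at hc
    nlinarith [mul_nonneg hc (by linarith : 0 ≤ y - θ.re), pow_pos hθ 2]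
  have hp : 0 < -((x - θ.re) / θ.im) := by
    rw [← neg_div]; exact div_pos (by linarith) hθ
  have h1 : (y - θ.re) / θ.im = (-((x - θ.re) / θ.im))⁻¹ := by
    rw [← neg_div, inv_div, div_eq_div_iff hθ.ne' (by linarith)]
    linarith
  unfold cauchyCDF
  rw [h1, Real.arctan_inv_of_pos hp, Real.arctan_neg]
  field_simp
  ring

lemma aux_deriv_mul4 {f g h k : ℝ → ℝ} {f' g' h' k' x : ℝ} (hf : HasDerivAt f f' x)
    (hg : HasDerivAt g g' x) (hh : HasDerivAt h h' x) (hk : HasDerivAt k k' x) :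
    HasDerivAt (fun t => f t * g t * h t * k t)
      (((f' * g x + f x * g') * h x + f x * g x * h') * k x + f x * g x * h x * k') x :=
  ((hf.mul hg).mul hh).mul hk

theorem stmt_17 (x₁ x₂ x₃ x₄ : ℝ) (h12 : x₁ < x₂) (h23 : x₂ < x₃) (h34 : x₃ < x₄)
    (θhat : ℂ) (hθhat : 0 < θhat.im)
    (hmax : ∀ θ : ℂ, 0 < θ.im →
      cauchyL ![x₁, x₂, x₃, x₄] θ ≤ cauchyL ![x₁, x₂, x₃, x₄] θhat) :
    cauchyCDF x₃ θhat - cauchyCDF x₁ θhat = 1 / 2 ∧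
      cauchyCDF x₄ θhat - cauchyCDF x₂ θhat = 1 / 2 := by
  obtain ⟨m, s⟩ := θhat
  simp only at hθhat
  let P : ℝ → ℝ → ℝ := fun u v =>
    ((x₁-u)^2+v^2) * ((x₂-u)^2+v^2) * ((x₃-u)^2+v^2) * ((x₄-u)^2+v^2)
  have hP : ∀ u v, 0 < v → 0 < P u v := by
    intro u v hv
    simp only [P]
    positivity
  have key : ∀ u v, 0 < v → 0 ≤ s^4 * P u v - v^4 * P m s := by
    intro u v hv
    have h := hmax ⟨u, v⟩ hv
    have e : ∀ u v, 0 < v → cauchyL ![x₁, x₂, x₃, x₄] ⟨u, v⟩ = (v^4 / P u v) / Real.pi^4 := by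
      intro u v hv
      simp only [cauchyL, Fin.prod_univ_four, P]
      simp
      field_simp
    rw [e u v hv, e m s hθhat, div_le_div_iff_of_pos_right (by positivity),
      div_le_div_iff₀ (hP u v hv) (hP m s hθhat)] at h
    linarith
  have d1 : ∀ x : ℝ, HasDerivAt (fun u : ℝ => (x-u)^2+s^2) (-2*(x-m)) m := by
    intro x
    have := (((hasDerivAt_id' m).const_sub x).fun_pow 2).add_const (s^2)
    refine this.congr_deriv ?_
    norm_num
  have d2 : ∀ x : ℝ, HasDerivAt (fun v : ℝ => (x-m)^2+v^2) (2*s) s := by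
    intro x
    have := ((hasDerivAt_id' s).fun_pow 2).const_add ((x-m)^2)
    refine this.congr_deriv ?_
    norm_num
  have hA := (((aux_deriv_mul4 (d1 x₁) (d1 x₂) (d1 x₃) (d1 x₄)).const_mul (s^4)).sub_const
    (s^4 * P m s))
  have hB := (((aux_deriv_mul4 (d2 x₁) (d2 x₂) (d2 x₃) (d2 x₄)).const_mul (s^4)).sub
    ((hasDerivAt_pow 4 s).mul_const (P m s)))
  have zA := IsLocalMin.hasDerivAt_eq_zero (by
    filter_upwards with u
    have := key u s hθhat
    simp only [P] at this ⊢
    linarith) hA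
  have zB := IsLocalMin.hasDerivAt_eq_zero (by
    filter_upwards [lt_mem_nhds hθhat] with v hv
    have := key m v hv
    simp only [P, Pi.sub_apply] at this ⊢
    linarith) hB
  have := aux_alg s (x₁-m) (x₂-m) (x₃-m) (x₄-m) hθhat (by linarith) (by linarith) (by linarith)
    (by
      have h4 : (-2 * s^4) ≠ 0 := by
        have : 0 < s^4 := by positivity
        linarith
      apply mul_left_cancel₀ h4
      linear_combination zA)
    (by
      have h4 : (2 * s^3) ≠ 0 := by positivity
      apply mul_left_cancel₀ h4
      simp only [P] at zB
      push_cast at zB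
      linear_combination zB)
  exact ⟨aux_cdf _ _ _ hθhat (h12.trans h23) this.1, aux_cdf _ _ _ hθhat (h23.trans h34) this.2⟩
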